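/- arXiv:1006.5636 — 2 statements merged into one kernel-verified Lean document; each statement's English description precedes it below -/
import Mathlib

section
/- Let L be a finite-dimensional Lie algebra over a field F. Let F*(L) be the intersection of all maximal subalgebras of L which have no abelian ideal completion (with F*(L) = L if no such maximal subalgebras exist), and let φ*(L) be the largest ideal of L contained in F*(L). Then φ*(L) equals the solvable radical R(L) of L. -/
/-- The strict core `k(B)` of a subalgebra `B` of `L`: the sum of all ideals of `L` that are
proper subalgebras of `B`. -/
def strictCore {F L : Type*} [Field F] [LieRing L] [LieAlgebra F L]
    (B : LieSubalgebra F L) : LieIdeal F L :=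
  sSup {I : LieIdeal F L | (I : LieSubalgebra F L) < B}

/-- `C` is a completion of the maximal subalgebra `M` of `L` if `C` is not contained in `M`
but every proper subalgebra of `C` that is an ideal of `L` is contained in `M`.
The set of completions of `M` is the index complex `I(M)`. -/
def IsCompletion {F L : Type*} [Field F] [LieRing L] [LieAlgebra F L]
    (M C : LieSubalgebra F L) : Prop :=
  ¬ C ≤ M ∧ ∀ I : LieIdeal F L, (I : LieSubalgebra F L) < C → (I : LieSubalgebra F L) ≤ M

/-- A maximal completion of `M`: a maximal element of the index complex `I(M)` under inclusion. -/
def IsMaxCompletion {F L : Type*} [Field F] [LieRing L] [LieAlgebra F L]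
    (M C : LieSubalgebra F L) : Prop :=
  IsCompletion M C ∧ ∀ D : LieSubalgebra F L, IsCompletion M D → C ≤ D → C = D

/-- The quotient of a subalgebra `C` of `L` by (the pullback along the inclusion of) an ideal
`K` of `L`. -/
abbrev quotIn {F L : Type*} [Field F] [LieRing L] [LieAlgebra F L]
    (C : LieSubalgebra F L) (K : LieIdeal F L) : Type _ :=
  C ⧸ LieIdeal.comap C.incl K

/-- The quotient Lie algebra `C / k(C)`. -/
abbrev quotCore {F L : Type*} [Field F] [LieRing L] [LieAlgebra F L]
    (C : LieSubalgebra F L) : Type _ :=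
  quotIn C (strictCore C)

/-- The largest ideal of `L` contained in the subalgebra `B`, denoted `B_L`. -/
def idealCore {F L : Type*} [Field F] [LieRing L] [LieAlgebra F L]
    (B : LieSubalgebra F L) : LieIdeal F L :=
  sSup {I : LieIdeal F L | (I : LieSubalgebra F L) ≤ B}

/-- A subalgebra `B` of `L` is a c-ideal of `L` if there is an ideal `C` of `L` such that
`L = B + C` and `B ∩ C ≤ B_L`. -/
def IsCIdeal {F L : Type*} [Field F] [LieRing L] [LieAlgebra F L]
    (B : LieSubalgebra F L) : Prop :=
  ∃ C : LieIdeal F L, B ⊔ (C : LieSubalgebra F L) = ⊤ ∧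
    B ⊓ (C : LieSubalgebra F L) ≤ (idealCore B : LieSubalgebra F L)

/-- A Lie algebra is supersolvable if it has a chain of ideals
`0 = I_0 ⊆ I_1 ⊆ ... ⊆ I_n = L` with `dim I_j = j` for each `j`. -/
def IsSupersolvableLieAlgebra (F L : Type*) [Field F] [LieRing L] [LieAlgebra F L] : Prop :=
  ∃ (n : ℕ) (I : Fin (n + 1) → LieIdeal F L), I 0 = ⊥ ∧ I (Fin.last n) = ⊤ ∧
    Monotone I ∧ ∀ j : Fin (n + 1), Module.finrank F (I j) = (j : ℕ)

/-- The natural quotient map `L → L ⧸ B` as a morphism of Lie algebras. -/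
def lieQuotMk {F L : Type*} [Field F] [LieRing L] [LieAlgebra F L] (B : LieIdeal F L) :
    L →ₗ⁅F⁆ L ⧸ B :=
  { (LieSubmodule.Quotient.mk' B).toLinearMap with
    map_lie' := rfl }

/-- A subalgebra `C` of `L` is a subideal of `L` if there is a chain of subalgebras
`C = C_0 ⊆ C_1 ⊆ ... ⊆ C_n = L` in which each `C_i` is an ideal of `C_{i+1}`. -/
def IsSubideal {F L : Type*} [Field F] [LieRing L] [LieAlgebra F L]
    (C : LieSubalgebra F L) : Prop :=
  ∃ (n : ℕ) (f : Fin (n + 1) → LieSubalgebra F L), f 0 = C ∧ f (Fin.last n) = ⊤ ∧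
    ∀ i : Fin n, f i.castSucc ≤ f i.succ ∧
      ∀ x ∈ f i.succ, ∀ y ∈ f i.castSucc, ⁅x, y⁆ ∈ f i.castSucc

/-- The Frattini subalgebra: the intersection of all maximal subalgebras of `L`. -/
def frattiniSubalgebra (F L : Type*) [Field F] [LieRing L] [LieAlgebra F L] :
    LieSubalgebra F L :=
  sInf {M : LieSubalgebra F L | IsCoatom M}

/-- The Frattini ideal: the largest ideal of `L` contained in the Frattini subalgebra. -/
def frattiniIdeal (F L : Type*) [Field F] [LieRing L] [LieAlgebra F L] : LieIdeal F L :=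
  idealCore (frattiniSubalgebra F L)

/-!
The theorem reduces to the claim that an ideal `I` is solvable if and only if it lies in every
maximal subalgebra `M` without abelian ideal completion. If `I` is solvable and `I ≰ M`, then an
ideal `C ≤ I` minimal among those outside `M` satisfies `[C, C] < C`, so it is an abelian ideal
completion of `M`.

Conversely, if `I` is not solvable, let `A ≤ I` be a minimal non-solvable ideal; it is perfect.
Some maximal `M` contains the radical but not `A`: otherwise, by Fitting's decomposition,
every element of `A` acts nilpotently on the quotient of `L` by the radical, and by Engel's theorem
the perfect ideal `A` vanishes there. All ideals properly inside `A` are solvable, so `A` is a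
completion of `M`. An abelian ideal completion `C` of `M` would force `[A, A] ≤ M`, since modulo the
largest ideal inside `M` the ideals `A` and `C` either coincide or commute, and the centralizer of
`C` is `C` itself.
-/

section LieIdeals

variable {R L : Type*} [CommRing R] [LieRing L] [LieAlgebra R L]

lemma mem_sup_lieIdeal_iff {B : LieSubalgebra R L} {I : LieIdeal R L} {x : L} :
    x ∈ B ⊔ (I : LieSubalgebra R L) ↔ ∃ b ∈ B, ∃ i ∈ I, b + i = x := by
  refine ⟨fun hx ↦ ?_, ?_⟩
  · let S : LieSubalgebra R L :=
      { toSubmodule := B.toSubmodule ⊔ I.toSubmodule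
        lie_mem' := by
          intro x y hx hy
          obtain ⟨b, hb, i, hi, rfl⟩ := Submodule.mem_sup.mp hx
          obtain ⟨c, hc, j, hj, rfl⟩ := Submodule.mem_sup.mp hy
          rw [add_lie, lie_add, add_assoc]
          exact Submodule.add_mem_sup (B.lie_mem hb hc)
            (I.add_mem (lie_mem_right R L I b j hj) (lie_mem_left R L I i (c + j) hi)) }
    have hBS : B ≤ S := fun y hy ↦ Submodule.mem_sup_left hy
    have hIS : (I : LieSubalgebra R L) ≤ S := fun y hy ↦ Submodule.mem_sup_right hy
    exact Submodule.mem_sup.mp (sup_le hBS hIS hx)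
  · rintro ⟨b, hb, i, hi, rfl⟩
    have hB : B ≤ B ⊔ (I : LieSubalgebra R L) := le_sup_left
    have hI : (I : LieSubalgebra R L) ≤ B ⊔ (I : LieSubalgebra R L) := le_sup_right
    exact add_mem (hB hb) (hI hi)

lemma isSolvable_of_isSolvable_lie_self {I : LieIdeal R L}
    (h : LieAlgebra.IsSolvable ↥⁅I, I⁆) : LieAlgebra.IsSolvable I := by
  obtain ⟨k, hk⟩ := (LieAlgebra.isSolvable_iff R _).mp h
  refine LieAlgebra.IsSolvable.mk (R := R) (k := k + 1) ?_
  rw [LieIdeal.derivedSeries_eq_bot_iff] at hk ⊢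
  rwa [LieAlgebra.derivedSeriesOfIdeal_add]

lemma lie_self_lt_of_isSolvable {I : LieIdeal R L} (h : LieAlgebra.IsSolvable I) (hI : I ≠ ⊥) :
    ⁅I, I⁆ < I := by
  refine (LieSubmodule.lie_le_right I I).lt_of_ne fun hperfect ↦ hI ?_
  obtain ⟨k, hk⟩ := (LieAlgebra.isSolvable_iff R _).mp h
  rw [LieIdeal.derivedSeries_eq_bot_iff] at hk
  exact (Function.iterate_fixed (f := fun J : LieIdeal R L ↦ ⁅J, J⁆) hperfect k).symm.trans hk

lemma lie_self_eq_of_minimal_not_isSolvable {A : LieIdeal R L}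
    (hA : Minimal (fun J : LieIdeal R L ↦ ¬ LieAlgebra.IsSolvable J) A) : ⁅A, A⁆ = A :=
  (LieSubmodule.lie_le_right A A).antisymm <|
    hA.le_of_le (mt isSolvable_of_isSolvable_lie_self hA.prop) (LieSubmodule.lie_le_right A A)

lemma eq_bot_of_le_lie_of_isNilpotent {M : Type*} [AddCommGroup M] [Module R M]
    [LieRingModule L M] [LieModule R L M] {A : LieIdeal R L} [LieModule.IsNilpotent A M]
    {N : LieSubmodule R L M} (hN : N ≤ ⁅A, N⁆) : N = ⊥ := by
  have hlcs (k : ℕ) : N ≤ A.lcs M k := by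
    induction k with
    | zero => exact le_top
    | succ k ih =>
      rw [LieIdeal.lcs_succ]
      exact hN.trans (LieSubmodule.mono_lie_right A ih)
  obtain ⟨k, hk⟩ := (LieModule.isNilpotent_iff R A M).mp inferInstance
  have hbot : A.lcs M k = ⊥ := by
    rw [← LieSubmodule.toSubmodule_eq_bot, LieIdeal.coe_lcs_eq, hk, LieSubmodule.bot_toSubmodule]
  exact le_bot_iff.mp (hbot ▸ hlcs k)

lemma le_of_lie_self_eq_of_isNilpotent_quotient {A S : LieIdeal R L} (hA : ⁅A, A⁆ = A)
    [LieModule.IsNilpotent A (L ⧸ S)] : A ≤ S := by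
  rw [← LieSubmodule.Quotient.map_mk'_eq_bot_le]
  refine eq_bot_of_le_lie_of_isNilpotent (A := A) ?_
  rw [← LieSubmodule.map_bracket_eq, hA]

lemma engel_sup_eq_top_of_mem [IsArtinian R L] {A : LieIdeal R L} {a : L} (ha : a ∈ A) :
    LieSubalgebra.engel R a ⊔ (A : LieSubalgebra R L) = ⊤ := by
  refine eq_top_iff.mpr fun x _ ↦ mem_sup_lieIdeal_iff.mpr ?_
  -- Fitting: `L = ker (ad a)^n + range (ad a)^n` for large `n`, and `range (ad a)^n ≤ A`.
  obtain ⟨k, hk⟩ := Filter.eventually_atTop.mp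
    (LieAlgebra.ad R L a).eventually_codisjoint_ker_pow_range_pow
  obtain ⟨e, _, he, ⟨y, rfl⟩, hx⟩ :=
    Submodule.codisjoint_iff_exists_add_eq.mp (hk (k + 1) k.le_succ) x
  refine ⟨e, (LieSubalgebra.mem_engel_iff R a e).mpr ⟨k + 1, he⟩, _, ?_, hx⟩
  rw [pow_succ', Module.End.mul_apply, LieAlgebra.ad_apply]
  exact lie_mem_left R L A _ _ ha

lemma isNilpotent_toEnd_quotient_of_engel_sup_eq_top [Module.Finite R L] {S : LieIdeal R L} {a : L}
    (h : LieSubalgebra.engel R a ⊔ (S : LieSubalgebra R L) = ⊤) :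
    IsNilpotent (LieModule.toEnd R L (L ⧸ S) a) := by
  have : Module.Finite R (L ⧸ S) := inferInstanceAs (Module.Finite R (L ⧸ S.toSubmodule))
  rw [Module.End.isNilpotent_iff_of_finite]
  intro q
  obtain ⟨x, rfl⟩ := LieSubmodule.Quotient.surjective_mk' S q
  obtain ⟨e, he, s, hs, rfl⟩ := mem_sup_lieIdeal_iff.mp (h ▸ LieSubalgebra.mem_top (R := R) x)
  obtain ⟨n, hn⟩ := (LieSubalgebra.mem_engel_iff R a e).mp he
  have hs' : LieSubmodule.Quotient.mk' S s = 0 := (LieSubmodule.Quotient.mk_eq_zero S).mpr hs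
  refine ⟨n, ?_⟩
  rw [map_add, hs', add_zero, LieModule.toEnd_pow_apply_map]
  exact (congrArg _ hn).trans (map_zero _)

lemma isNilpotent_quotient_of_forall_isCoatom_le [IsArtinian R L] [IsNoetherian R L]
    {A S : LieIdeal R L}
    (h : ∀ M : LieSubalgebra R L, IsCoatom M → (S : LieSubalgebra R L) ≤ M →
      (A : LieSubalgebra R L) ≤ M) :
    LieModule.IsNilpotent A (L ⧸ S) := by
  refine (LieModule.isNilpotent_iff_forall (R := R)).mpr fun a ↦ ?_
  refine isNilpotent_toEnd_quotient_of_engel_sup_eq_top (a := (a : L)) ?_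
  by_contra hne
  obtain ⟨M, hM, hle⟩ := (eq_top_or_exists_le_coatom _).resolve_left hne
  obtain ⟨hEM, hSM⟩ := sup_le_iff.mp hle
  exact hM.1 (top_le_iff.mp (engel_sup_eq_top_of_mem (R := R) a.2 ▸ sup_le hEM (h M hM hSM)))

lemma le_of_lie_self_eq_of_forall_isCoatom_le [IsArtinian R L] [IsNoetherian R L]
    {A S : LieIdeal R L} (hA : ⁅A, A⁆ = A)
    (h : ∀ M : LieSubalgebra R L, IsCoatom M → (S : LieSubalgebra R L) ≤ M →
      (A : LieSubalgebra R L) ≤ M) :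
    A ≤ S :=
  have := isNilpotent_quotient_of_forall_isCoatom_le h
  le_of_lie_self_eq_of_isNilpotent_quotient hA

end LieIdeals

section IdealCompletions

variable {F L : Type*} [Field F] [LieRing L] [LieAlgebra F L]

lemma le_idealCore_iff {B : LieSubalgebra F L} {I : LieIdeal F L} :
    I ≤ idealCore B ↔ (I : LieSubalgebra F L) ≤ B := by
  refine ⟨fun h ↦ ?_, fun h ↦ le_sSup h⟩
  have hcore : (idealCore B).toSubmodule ≤ B.toSubmodule := by
    rw [idealCore, LieSubmodule.sSup_toSubmodule]
    refine sSup_le ?_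
    rintro _ ⟨J, hJ, rfl⟩
    exact hJ
  exact fun x hx ↦ hcore (h hx)

lemma isCompletion_lieIdeal_iff_minimal {M : LieSubalgebra F L} {C : LieIdeal F L} :
    IsCompletion M (C : LieSubalgebra F L) ↔
      Minimal (fun J : LieIdeal F L ↦ ¬ J ≤ idealCore M) C := by
  simp only [minimal_iff_forall_lt, not_not, le_idealCore_iff]
  exact Iff.rfl

/-- The maximal subalgebra `M` has an abelian ideal completion: an ideal completion `C` whose
quotient `C / k(C)` by the strict core is abelian. -/
def HasAbelianIdealCompletion (M : LieSubalgebra F L) : Prop :=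
  ∃ C : LieIdeal F L, IsCompletion M (C : LieSubalgebra F L) ∧
    ⁅C, C⁆ ≤ strictCore (C : LieSubalgebra F L)

lemma IsCompletion.strictCore_le_idealCore {M C : LieSubalgebra F L} (hC : IsCompletion M C) :
    strictCore C ≤ idealCore M :=
  sSup_le fun I hI ↦ le_idealCore_iff.mpr (hC.2 I hI)

lemma hasAbelianIdealCompletion_of_isSolvable [FiniteDimensional F L] {M : LieSubalgebra F L}
    {I : LieIdeal F L} (hI : LieAlgebra.IsSolvable I) (hIM : ¬ (I : LieSubalgebra F L) ≤ M) :
    HasAbelianIdealCompletion M := by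
  have := LieSubmodule.wellFoundedLT_of_isArtinian F L L
  obtain ⟨C, hCI, hC⟩ := exists_minimal_le_of_wellFoundedLT
    (fun J : LieIdeal F L ↦ ¬ J ≤ idealCore M) I (mt le_idealCore_iff.mp hIM)
  have hC_ne_bot : C ≠ ⊥ := by
    rintro rfl
    exact hC.prop bot_le
  have hC_solvable : LieAlgebra.IsSolvable C := LieAlgebra.le_solvable_ideal_solvable hCI hI
  exact ⟨C, isCompletion_lieIdeal_iff_minimal.mpr hC,
    le_sSup (lie_self_lt_of_isSolvable hC_solvable hC_ne_bot)⟩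

lemma le_idealCore_sup_of_lie_le {M : LieSubalgebra F L} {C Z : LieIdeal F L}
    (hMC : M ⊔ (C : LieSubalgebra F L) = ⊤) (hCZ : C ≤ Z) (hlie : ⁅C, Z⁆ ≤ idealCore M) :
    Z ≤ idealCore M ⊔ C := by
  have hlieM : ∀ c ∈ C, ∀ z ∈ Z, ⁅c, z⁆ ∈ M := fun c hc z hz ↦
    le_idealCore_iff.mp hlie (LieSubmodule.lie_mem_lie hc hz)
  let N : LieIdeal F L :=
    { toSubmodule := M.toSubmodule ⊓ Z.toSubmodule
      lie_mem := by
        rintro x z ⟨hzM, hzZ⟩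
        obtain ⟨m, hm, c, hc, rfl⟩ :=
          mem_sup_lieIdeal_iff.mp (hMC ▸ LieSubalgebra.mem_top (R := F) x)
        refine ⟨?_, lie_mem_right F L Z _ z hzZ⟩
        rw [add_lie]
        exact M.add_mem (M.lie_mem hm hzM) (hlieM c hc z hzZ) }
  have hN : N ≤ idealCore M := le_idealCore_iff.mpr fun _ hx ↦ hx.1
  intro z hz
  obtain ⟨m, hm, c, hc, rfl⟩ := mem_sup_lieIdeal_iff.mp (hMC ▸ LieSubalgebra.mem_top (R := F) z)
  have hmZ : m ∈ Z := (Submodule.add_mem_iff_left Z.toSubmodule (hCZ hc)).mp hz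
  exact (LieSubmodule.mem_sup _ _ _).mpr ⟨m, hN ⟨hm, hmZ⟩, c, hc, rfl⟩

lemma IsCompletion.lie_self_le_idealCore {M : LieSubalgebra F L} (hM : IsCoatom M)
    {A C : LieIdeal F L} (hA : IsCompletion M (A : LieSubalgebra F L))
    (hC : IsCompletion M (C : LieSubalgebra F L)) (hCC : ⁅C, C⁆ ≤ idealCore M) :
    ⁅A, A⁆ ≤ idealCore M := by
  have hMC : M ⊔ (C : LieSubalgebra F L) = ⊤ := hM.2 _ (left_lt_sup.mpr hC.1)
  rw [isCompletion_lieIdeal_iff_minimal] at hA hC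
  by_cases hAC : A ≤ C
  · rwa [hC.eq_of_le hA.prop hAC]
  have hinf : A ⊓ C ≤ idealCore M :=
    not_not.mp (hA.not_prop_of_lt (inf_lt_left.mpr hAC))
  have hACK : ⁅A, C⁆ ≤ idealCore M := (LieSubmodule.lie_le_inf A C).trans hinf
  -- `A + C` centralizes `C` modulo `idealCore M`.
  have hsup : A ⊔ C ≤ idealCore M ⊔ C := by
    refine le_idealCore_sup_of_lie_le hMC le_sup_right ?_
    rw [LieSubmodule.lie_sup, LieSubmodule.lie_comm]
    exact sup_le hACK hCC
  calc ⁅A, A⁆ ≤ ⁅A, idealCore M ⊔ C⁆ := LieSubmodule.mono_lie_right A (le_sup_left.trans hsup)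
    _ = ⁅A, idealCore M⁆ ⊔ ⁅A, C⁆ := LieSubmodule.lie_sup _ _ _
    _ ≤ idealCore M := sup_le (LieSubmodule.lie_le_right _ _) hACK

lemma IsCompletion.not_hasAbelianIdealCompletion {M : LieSubalgebra F L} (hM : IsCoatom M)
    {A : LieIdeal F L} (hA : IsCompletion M (A : LieSubalgebra F L)) (hAA : ⁅A, A⁆ = A) :
    ¬ HasAbelianIdealCompletion M := by
  rintro ⟨C, hC, hCC⟩
  have hAK := hA.lie_self_le_idealCore hM hC (hCC.trans hC.strictCore_le_idealCore)
  exact hA.1 (le_idealCore_iff.mp (hAA ▸ hAK))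

lemma isSolvable_of_forall_isCoatom_le [FiniteDimensional F L] {I : LieIdeal F L}
    (hI : ∀ M : LieSubalgebra F L, IsCoatom M → ¬ HasAbelianIdealCompletion M →
      (I : LieSubalgebra F L) ≤ M) :
    LieAlgebra.IsSolvable I := by
  by_contra hIs
  have := LieSubmodule.wellFoundedLT_of_isArtinian F L L
  obtain ⟨A, hAI, hA⟩ := exists_minimal_le_of_wellFoundedLT
    (fun J : LieIdeal F L ↦ ¬ LieAlgebra.IsSolvable J) I hIs
  have hAA : ⁅A, A⁆ = A := lie_self_eq_of_minimal_not_isSolvable hA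
  refine hA.prop ((LieAlgebra.LieIdeal.solvable_iff_le_radical F L A).mpr ?_)
  refine le_of_lie_self_eq_of_forall_isCoatom_le hAA fun M hM hRM ↦ ?_
  by_contra hAM
  have hA_completion : IsCompletion M (A : LieSubalgebra F L) := by
    refine ⟨hAM, fun J hJ ↦ ?_⟩
    have hJs : LieAlgebra.IsSolvable J := not_not.mp (hA.not_prop_of_lt hJ)
    have hJR : J ≤ LieAlgebra.radical F L :=
      (LieAlgebra.LieIdeal.solvable_iff_le_radical F L J).mp hJs
    exact fun x hx ↦ hRM (hJR hx)
  have hIM := hI M hM (hA_completion.not_hasAbelianIdealCompletion hM hAA)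
  exact hAM fun x hx ↦ hIM (hAI hx)

lemma isSolvable_iff_forall_isCoatom_le [FiniteDimensional F L] {I : LieIdeal F L} :
    LieAlgebra.IsSolvable I ↔
      ∀ M : LieSubalgebra F L, IsCoatom M → ¬ HasAbelianIdealCompletion M →
        (I : LieSubalgebra F L) ≤ M :=
  ⟨fun hI _ _ hM ↦ not_not.mp (mt (hasAbelianIdealCompletion_of_isSolvable hI) hM),
    isSolvable_of_forall_isCoatom_le⟩

end IdealCompletions

/-- Let `F*(L)` be the intersection of all maximal subalgebras of `L` having no
abelian ideal completion (`F*(L) = L` if there are none), and `φ*(L)` the largest ideal of `L`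
contained in `F*(L)`. Then `φ*(L)` is the solvable radical `R(L)` of `L`. -/
theorem statement10 {F L : Type*} [Field F] [LieRing L] [LieAlgebra F L] [FiniteDimensional F L] :
    idealCore (sInf {M : LieSubalgebra F L | IsCoatom M ∧
        ¬ ∃ C : LieIdeal F L, IsCompletion M (C : LieSubalgebra F L) ∧
          ⁅C, C⁆ ≤ strictCore (C : LieSubalgebra F L)}) =
      LieAlgebra.radical F L := by
  refine eq_of_forall_le_iff fun I ↦ ?_
  calc I ≤ idealCore _
    _ ↔ (I : LieSubalgebra F L) ≤ sInf {M | IsCoatom M ∧ ¬ HasAbelianIdealCompletion M} :=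
      le_idealCore_iff
    _ ↔ ∀ M : LieSubalgebra F L, IsCoatom M → ¬ HasAbelianIdealCompletion M →
        (I : LieSubalgebra F L) ≤ M := by
      simp only [le_sInf_iff, Set.mem_ofPred_eq, and_imp]
    _ ↔ LieAlgebra.IsSolvable I := isSolvable_iff_forall_isCoatom_le.symm
    _ ↔ I ≤ LieAlgebra.radical F L := LieAlgebra.LieIdeal.solvable_iff_le_radical F L I
end

section
/- Let L be a finite-dimensional Lie algebra over an algebraically closed field F of characteristic zero. Then L is supersolvable if and only if every maximal subalgebra M of L has a maximal completion C (a maximal element of I(M) under inclusion) with dim C − dim k(C) = 1. -/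
/-!
Supersolvability means that every chief factor of `L` is one-dimensional. If this holds, an ideal
`C` that is minimal among the ideals not contained in `M` is a maximal completion of `M` with
`k(C) ⋖ C`, so `dim C - dim k(C) = 1`.

Conversely, by Lie's theorem it is enough to show that `L` is solvable. Otherwise `L / rad L` is
nonzero and perfect, so a maximal ideal `N` containing `rad L` has `L / N` perfect and hence not
solvable. Let `M` be a maximal subalgebra containing `N` and `C` a maximal completion of `M` with
`C = k(C) + F x`; then `k(C) ⊆ N` by maximality of `N`. If `C ≠ L`, an eigenvector of `ad x` on
`L / C` lifts to some `y` for which `D = C + F y` is a subalgebra. As `D` is not a completion of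
`M`, it contains an ideal outside `M`, which together with `N` generates `L`. Hence `L / N` is
spanned by the classes of `x` and `y`, but Lie algebras spanned by two elements are solvable.
-/

section ChiefFactors

theorem finrank_add_finrank_le_of_sup_inf_eq {F V : Type*} [DivisionRing F] [AddCommGroup V]
    [Module F V] [FiniteDimensional F V] {I J A B : Submodule F V} (hAB : A ≤ B)
    (hA : J ⊓ A ≤ I) (hB : I ⊔ J ⊓ B = J) :
    Module.finrank F J + Module.finrank F A ≤ Module.finrank F I + Module.finrank F B := by
  have hJ := Submodule.finrank_sup_add_finrank_inf_eq I (J ⊓ B)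
  have hJA := Submodule.finrank_sup_add_finrank_inf_eq (J ⊓ B) A
  have hsup : Module.finrank F ↥(J ⊓ B ⊔ A) ≤ Module.finrank F B :=
    Submodule.finrank_mono (sup_le inf_le_right hAB)
  have hinf : Module.finrank F ↥(J ⊓ B ⊓ A) ≤ Module.finrank F ↥(I ⊓ (J ⊓ B)) :=
    Submodule.finrank_mono
      (le_inf ((inf_le_inf_right A inf_le_left).trans hA) inf_le_left)
  rw [hB] at hJ
  omega

variable {F L : Type*} [Field F] [LieRing L] [LieAlgebra F L] [FiniteDimensional F L]

theorem IsSupersolvableLieAlgebra.finrank_of_covBy (h : IsSupersolvableLieAlgebra F L)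
    {I J : LieIdeal F L} (hIJ : I ⋖ J) : Module.finrank F J = Module.finrank F I + 1 := by
  obtain ⟨n, E, hE₀, hEn, hmono, hrank⟩ := h
  obtain ⟨j, hj, hj'⟩ : ∃ j : Fin n, J ⊓ E j.castSucc ≤ I ∧ ¬ J ⊓ E j.succ ≤ I := by
    by_contra! hstep
    have hall : ∀ j : Fin (n + 1), J ⊓ E j ≤ I := Fin.induction (by simp [hE₀]) hstep
    exact hIJ.lt.not_ge (by simpa [hEn] using hall (Fin.last n))
  have hsup : I ⊔ J ⊓ E j.succ = J :=
    (hIJ.eq_or_eq le_sup_left (sup_le hIJ.le inf_le_left)).resolve_left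
      fun h ↦ hj' (sup_eq_left.mp h)
  have hle : Module.finrank F J + Module.finrank F (E j.castSucc) ≤
      Module.finrank F I + Module.finrank F (E j.succ) :=
    finrank_add_finrank_le_of_sup_inf_eq (hmono j.castSucc_le_succ) hj
      (congrArg LieSubmodule.toSubmodule hsup)
  have hlt : Module.finrank F I < Module.finrank F J := Submodule.finrank_lt_finrank_of_lt hIJ.lt
  rw [hrank, hrank, Fin.val_castSucc, Fin.val_succ] at hle
  omega

theorem isSupersolvableLieAlgebra_iff_finrank_of_covBy :
    IsSupersolvableLieAlgebra F L ↔
      ∀ I J : LieIdeal F L, I ⋖ J → Module.finrank F J = Module.finrank F I + 1 := by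
  refine ⟨fun h _ _ ↦ h.finrank_of_covBy, fun h ↦ ?_⟩
  have := LieSubmodule.wellFoundedLT_of_isArtinian F L L
  have := LieSubmodule.wellFoundedGT_of_noetherian F L L
  obtain ⟨a, ha₀, n, han, hcov⟩ :=
    exists_covBy_seq_of_wellFoundedLT_wellFoundedGT (LieIdeal F L)
  have hrank : ∀ k ≤ n, Module.finrank F (a k) = k := fun k ↦ by
    induction k with
    | zero => rw [ha₀.eq_bot]; exact fun _ ↦ finrank_bot F L
    | succ k ih => exact fun hk ↦ by rw [h _ _ (hcov k hk), ih (by omega)]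
  exact ⟨n, fun j ↦ a j, ha₀.eq_bot, han.eq_top,
    Fin.monotone_iff_le_succ.mpr fun j ↦ (hcov j j.isLt).le, fun j ↦ hrank j j.is_le⟩

end ChiefFactors

section LieTheorem

theorem exists_lieSubmodule_eq_sup_span_singleton {R L M : Type*} [CommRing R] [LieRing L]
    [LieAlgebra R L] [AddCommGroup M] [Module R M] [LieRingModule L M] [LieModule R L M]
    (N : LieSubmodule R L M) (v : M) (hv : ∀ x : L, ⁅x, v⁆ ∈ N.toSubmodule ⊔ R ∙ v) :
    ∃ P : LieSubmodule R L M, P.toSubmodule = N.toSubmodule ⊔ R ∙ v := by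
  refine ⟨{ N.toSubmodule ⊔ R ∙ v with lie_mem := fun {x m} hm ↦ ?_ }, rfl⟩
  suffices hle : N.toSubmodule ⊔ R ∙ v ≤
      (N.toSubmodule ⊔ R ∙ v).comap (LieModule.toEnd R L M x) from hle hm
  exact sup_le (fun n hn ↦ Submodule.mem_sup_left (N.lie_mem hn))
    ((Submodule.span_singleton_le_iff_mem _ _).mpr (hv x))

variable {F L M : Type*} [Field F] [IsAlgClosed F] [CharZero F] [LieRing L] [LieAlgebra F L]
  [LieAlgebra.IsSolvable L] [AddCommGroup M] [Module F M] [LieRingModule L M] [LieModule F L M]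
  [FiniteDimensional F M] {N P : LieSubmodule F L M}

theorem exists_mem_notMem_forall_lie_sub_smul_mem (hNP : ¬ P ≤ N) :
    ∃ v ∈ P, v ∉ N ∧ ∀ x : L, ∃ c : F, ⁅x, v⁆ - c • v ∈ N := by
  set Q : LieSubmodule F L (M ⧸ N) := P.map (LieSubmodule.Quotient.mk' N)
  have : Nontrivial Q := (LieSubmodule.nontrivial_iff_ne_bot F L _).mpr
    fun h ↦ hNP ((LieSubmodule.Quotient.map_mk'_eq_bot_le N P).mp h)
  obtain ⟨χ, hχ⟩ := LieModule.exists_nontrivial_weightSpace_of_isSolvable F L Q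
  obtain ⟨⟨⟨w, hwQ⟩, hw⟩, hw₀⟩ := exists_ne (0 : LieModule.weightSpace Q χ)
  obtain ⟨v, hvP, rfl⟩ := (LieSubmodule.mem_map w).mp hwQ
  rw [LieModule.mem_weightSpace] at hw
  refine ⟨v, hvP, fun hvN ↦ hw₀ ?_, fun x ↦ ⟨χ x, ?_⟩⟩
  · exact Subtype.ext (Subtype.ext ((LieSubmodule.Quotient.mk_eq_zero N).mpr hvN))
  · rw [← LieSubmodule.Quotient.mk_eq_zero, map_sub, map_smul, LieModuleHom.map_lie, sub_eq_zero]
    exact congrArg Subtype.val (hw x)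

theorem finrank_of_covBy_of_isSolvable (hNP : N ⋖ P) :
    Module.finrank F P = Module.finrank F N + 1 := by
  obtain ⟨v, hvP, hvN, hv⟩ := exists_mem_notMem_forall_lie_sub_smul_mem hNP.lt.not_ge
  obtain ⟨Q, hQ⟩ := exists_lieSubmodule_eq_sup_span_singleton N v fun x ↦ by
    obtain ⟨c, hc⟩ := hv x
    exact Submodule.mem_sup.mpr
      ⟨_, hc, c • v, Submodule.smul_mem _ c (Submodule.mem_span_singleton_self v),
        sub_add_cancel _ _⟩
  have hQP : Q = P := by
    refine (hNP.eq_or_eq ?_ ?_).resolve_left ?_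
    · rw [← LieSubmodule.toSubmodule_le_toSubmodule, hQ]
      exact le_sup_left
    · rw [← LieSubmodule.toSubmodule_le_toSubmodule, hQ]
      exact sup_le hNP.le ((Submodule.span_singleton_le_iff_mem _ _).mpr hvP)
    · rintro rfl
      exact hvN (sup_eq_left.mp hQ.symm (Submodule.mem_span_singleton_self v))
  change Module.finrank F P.toSubmodule = Module.finrank F N.toSubmodule + 1
  rw [← hQP, hQ, Submodule.finrank_sup_span_singleton hvN]

theorem isSupersolvableLieAlgebra_of_isSolvable [FiniteDimensional F L] :
    IsSupersolvableLieAlgebra F L :=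
  isSupersolvableLieAlgebra_iff_finrank_of_covBy.mpr fun _ _ ↦ finrank_of_covBy_of_isSolvable

end LieTheorem

section Completions

variable {F L : Type*} [Field F] [LieRing L] [LieAlgebra F L] {M B C D : LieSubalgebra F L}

theorem strictCore_le_iff : (strictCore B : LieSubalgebra F L) ≤ M ↔
    ∀ I : LieIdeal F L, (I : LieSubalgebra F L) < B → (I : LieSubalgebra F L) ≤ M := by
  rw [← LieSubalgebra.toSubmodule_le_toSubmodule, LieIdeal.toLieSubalgebra_toSubmodule,
    strictCore, LieSubmodule.sSup_toSubmodule_eq_iSup]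
  exact iSup₂_le_iff

theorem strictCore_le (B : LieSubalgebra F L) : (strictCore B : LieSubalgebra F L) ≤ B :=
  strictCore_le_iff.mpr fun _ hI ↦ hI.le

theorem IsCompletion.strictCore_le_left (h : IsCompletion M C) :
    (strictCore C : LieSubalgebra F L) ≤ M :=
  strictCore_le_iff.mpr h.2

theorem IsCompletion.strictCore_covBy {I : LieIdeal F L}
    (h : IsCompletion M (I : LieSubalgebra F L)) : strictCore (I : LieSubalgebra F L) ⋖ I :=
  ⟨lt_of_le_not_ge (strictCore_le (I : LieSubalgebra F L))
      fun hI ↦ h.1 (le_trans (b := (strictCore (I : LieSubalgebra F L) : LieSubalgebra F L))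
        hI h.strictCore_le_left),
    fun _ hJ hJI ↦ hJ.not_ge (le_sSup hJI)⟩

theorem IsCompletion.isMaxCompletion_of_lieIdeal {I : LieIdeal F L}
    (h : IsCompletion M (I : LieSubalgebra F L)) : IsMaxCompletion M (I : LieSubalgebra F L) :=
  ⟨h, fun _ hD hle ↦ by_contra fun hne ↦ h.1 (hD.2 I (lt_of_le_of_ne hle hne))⟩

theorem exists_lieIdeal_isCompletion [FiniteDimensional F L] (hM : M ≠ ⊤) :
    ∃ I : LieIdeal F L, IsCompletion M (I : LieSubalgebra F L) := by
  have := LieSubmodule.wellFoundedLT_of_isArtinian F L L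
  obtain ⟨I, hI, hmin⟩ := exists_minimal_of_wellFoundedLT
    (fun I : LieIdeal F L ↦ ¬ (I : LieSubalgebra F L) ≤ M)
    ⟨⊤, fun h ↦ hM (top_le_iff.mp fun _ _ ↦ h trivial)⟩
  exact ⟨I, hI, fun J hJ ↦ by_contra fun hJM ↦ hJ.not_ge (hmin hJM hJ.le)⟩

theorem IsMaxCompletion.exists_lieIdeal_lt_not_le (h : IsMaxCompletion M C) (hCD : C < D) :
    ∃ I : LieIdeal F L, (I : LieSubalgebra F L) < D ∧ ¬ (I : LieSubalgebra F L) ≤ M := by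
  by_contra! hD
  exact hCD.ne (h.2 D ⟨fun hDM ↦ h.1.1 (hCD.le.trans hDM), hD⟩ hCD.le)

theorem IsSupersolvableLieAlgebra.exists_isMaxCompletion [FiniteDimensional F L]
    (h : IsSupersolvableLieAlgebra F L) (hM : M ≠ ⊤) :
    ∃ C : LieSubalgebra F L, IsMaxCompletion M C ∧
      Module.finrank F C = Module.finrank F (strictCore C) + 1 := by
  obtain ⟨I, hI⟩ := exists_lieIdeal_isCompletion hM
  exact ⟨I, hI.isMaxCompletion_of_lieIdeal, h.finrank_of_covBy hI.strictCore_covBy⟩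

end Completions

section SolvableQuotients

open LieAlgebra

theorem map_derivedSeriesOfIdeal_le {R L L' : Type*} [CommRing R] [LieRing L] [LieAlgebra R L]
    [LieRing L'] [LieAlgebra R L'] (f : L →ₗ⁅R⁆ L') (I : LieIdeal R L) (k : ℕ) :
    (derivedSeriesOfIdeal R L k I).map f ≤ derivedSeriesOfIdeal R L' k (I.map f) := by
  induction k with
  | zero => exact le_rfl
  | succ k ih =>
    simp only [derivedSeriesOfIdeal_succ]
    exact (LieIdeal.map_bracket_le f).trans (LieSubmodule.mono_lie ih ih)

theorem isSolvable_comap_of_isSolvable_ker {R L L' : Type*} [CommRing R] [LieRing L]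
    [LieAlgebra R L] [LieRing L'] [LieAlgebra R L'] (f : L →ₗ⁅R⁆ L') [IsSolvable f.ker]
    (J : LieIdeal R L') [IsSolvable J] : IsSolvable (J.comap f) := by
  obtain ⟨k, hk⟩ := IsSolvable.solvable (R := R) (L := J)
  obtain ⟨l, hl⟩ := IsSolvable.solvable (R := R) (L := f.ker)
  rw [LieIdeal.derivedSeries_eq_bot_iff] at hk hl
  have hker : derivedSeriesOfIdeal R L k (J.comap f) ≤ f.ker := by
    rw [← LieIdeal.map_eq_bot_iff, eq_bot_iff, ← hk]
    exact (map_derivedSeriesOfIdeal_le f _ k).trans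
      (derivedSeriesOfIdeal_mono LieIdeal.map_comap_le k)
  refine IsSolvable.mk (R := R) (k := l + k) ?_
  rw [LieIdeal.derivedSeries_eq_bot_iff, derivedSeriesOfIdeal_add, eq_bot_iff, ← hl]
  exact derivedSeriesOfIdeal_mono hker l

theorem isSolvable_of_span_pair_eq_top {R L : Type*} [CommRing R] [LieRing L] [LieAlgebra R L]
    {x y : L} (h : Submodule.span R {x, y} = ⊤) : IsSolvable L := by
  have hbracket : (derivedSeries R L 1).toSubmodule ≤ R ∙ ⁅x, y⁆ := by
    rw [derivedSeries_def, derivedSeriesOfIdeal_succ, derivedSeriesOfIdeal_zero,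
      LieSubmodule.lieIdeal_oper_eq_linear_span', Submodule.span_le]
    rintro _ ⟨u, -, v, -, rfl⟩
    obtain ⟨a, b, rfl⟩ := Submodule.mem_span_pair.mp (h ▸ Submodule.mem_top (x := u))
    obtain ⟨c, d, rfl⟩ := Submodule.mem_span_pair.mp (h ▸ Submodule.mem_top (x := v))
    refine Submodule.mem_span_singleton.mpr ⟨a * d - b * c, ?_⟩
    simp only [lie_add, add_lie, lie_smul, smul_lie, lie_self, ← lie_skew x y]
    module
  have habelian : IsLieAbelian (derivedSeries R L 1) := by
    refine ⟨fun ⟨u, hu⟩ ⟨v, hv⟩ ↦ Subtype.ext ?_⟩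
    obtain ⟨a, rfl⟩ := Submodule.mem_span_singleton.mp (hbracket hu)
    obtain ⟨b, rfl⟩ := Submodule.mem_span_singleton.mp (hbracket hv)
    change ⁅a • ⁅x, y⁆, b • ⁅x, y⁆⁆ = 0
    rw [lie_smul, smul_lie, lie_self, smul_zero, smul_zero]
  rw [abelian_iff_derived_one_eq_bot, derivedSeries_def, ← derivedSeriesOfIdeal_add] at habelian
  exact IsSolvable.mk habelian

variable {F L : Type*} [Field F] [LieRing L] [LieAlgebra F L]

theorem isSolvable_quotient_of_sup_span_pair_eq_top {N : LieIdeal F L} {x y : L}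
    (h : N.toSubmodule ⊔ Submodule.span F {x, y} = ⊤) : IsSolvable (L ⧸ N) := by
  refine isSolvable_of_span_pair_eq_top (R := F) (x := lieQuotMk N x) (y := lieQuotMk N y) ?_
  rw [← Set.image_pair, ← LieHom.coe_toLinearMap, Submodule.span_image]
  exact (Submodule.map_mkQ_eq_top _ _).mpr h

theorem lieQuotMk_surjective (I : LieIdeal F L) : Function.Surjective (lieQuotMk I) :=
  LieSubmodule.Quotient.surjective_mk' I

theorem ker_lieQuotMk (I : LieIdeal F L) : (lieQuotMk I).ker = I := by
  ext x
  exact LieSubmodule.Quotient.mk_eq_zero I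

theorem derivedSeries_quotient_eq_top_iff (N : LieIdeal F L) (k : ℕ) :
    derivedSeries F (L ⧸ N) k = ⊤ ↔ derivedSeries F L k ⊔ N = ⊤ := by
  rw [← LieIdeal.derivedSeries_map_eq k (lieQuotMk_surjective N),
    ← LieSubmodule.toSubmodule_eq_top, ← LieSubmodule.toSubmodule_eq_top,
    LieIdeal.coe_map_of_surjective (lieQuotMk_surjective N), LieSubmodule.sup_toSubmodule, sup_comm]
  exact Submodule.map_mkQ_eq_top _ _

variable (F L) in
theorem hasTrivialRadical_quotient_radical [FiniteDimensional F L] :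
    HasTrivialRadical F (L ⧸ radical F L) := by
  refine hasTrivialRadical_of_no_solvable_ideals fun J hJ ↦ ?_
  have : IsSolvable (lieQuotMk (radical F L)).ker := by
    rw [ker_lieQuotMk]; infer_instance
  have hle : J.comap (lieQuotMk (radical F L)) ≤ (lieQuotMk (radical F L)).ker := by
    rw [ker_lieQuotMk, ← LieIdeal.solvable_iff_le_radical]
    exact isSolvable_comap_of_isSolvable_ker _ J
  rw [eq_bot_iff]
  intro y hy
  obtain ⟨x, rfl⟩ := lieQuotMk_surjective _ y
  exact hle hy

variable (F L) in
theorem derivedSeries_one_eq_top_of_isSemisimple [IsSemisimple F L] :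
    derivedSeries F L 1 = ⊤ := by
  rw [← compl_eq_bot]
  have : IsLieAbelian ((derivedSeries F L 1)ᶜ : LieIdeal F L) := by
    rw [LieSubmodule.lie_abelian_iff_lie_self_eq_bot, eq_bot_iff,
      ← inf_compl_eq_bot (a := derivedSeries F L 1)]
    exact le_inf (LieSubmodule.mono_lie le_top le_top) (LieSubmodule.lie_le_right _ _)
  exact HasTrivialRadical.eq_bot_of_isSolvable _

theorem isSolvable_of_forall_isCoatom_isSolvable_quotient [CharZero F] [FiniteDimensional F L]
    (h : ∀ N : LieIdeal F L, IsCoatom N → IsSolvable (L ⧸ N)) : IsSolvable L := by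
  suffices hrad : radical F L = ⊤ by
    have : IsSolvable (⊤ : LieIdeal F L) := hrad ▸ radicalIsSolvable F L
    rwa [← solvable_iff_equiv_solvable LieSubalgebra.topEquiv (R := F)]
  by_contra hrad
  obtain ⟨N, hN, hradN⟩ := (eq_top_or_exists_le_coatom (radical F L)).resolve_left hrad
  have hperfect : derivedSeries F (L ⧸ radical F L) 1 = ⊤ := by
    have := hasTrivialRadical_quotient_radical F L
    exact derivedSeries_one_eq_top_of_isSemisimple F (L ⧸ radical F L)
  have hperfectN : derivedSeries F (L ⧸ N) 1 = ⊤ := by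
    rw [derivedSeries_quotient_eq_top_iff] at hperfect ⊢
    exact top_le_iff.mp (hperfect.ge.trans (sup_le_sup_left hradN _))
  have := h N hN
  have : Nontrivial (L ⧸ N) := Submodule.Quotient.nontrivial_iff.mpr
    ((LieSubmodule.toSubmodule_eq_top N).not.mpr hN.1)
  exact (derivedSeries_lt_top_of_solvable F (L ⧸ N)).ne hperfectN

end SolvableQuotients

section Extensions

variable {F L : Type*} [Field F] [LieRing L] [LieAlgebra F L]

theorem exists_lieSubalgebra_eq_sup_span_singleton {R L : Type*} [CommRing R] [LieRing L]
    [LieAlgebra R L] (C : LieSubalgebra R L) (y : L)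
    (hy : ∀ c ∈ C, ⁅c, y⁆ ∈ C.toSubmodule ⊔ R ∙ y) :
    ∃ D : LieSubalgebra R L, D.toSubmodule = C.toSubmodule ⊔ R ∙ y := by
  refine ⟨{ C.toSubmodule ⊔ R ∙ y with lie_mem' := fun {u v} hu hv ↦ ?_ }, rfl⟩
  obtain ⟨c, hc, _, hr, rfl⟩ := Submodule.mem_sup.mp hu
  obtain ⟨r, rfl⟩ := Submodule.mem_span_singleton.mp hr
  obtain ⟨c', hc', _, hs, rfl⟩ := Submodule.mem_sup.mp hv
  obtain ⟨s, rfl⟩ := Submodule.mem_span_singleton.mp hs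
  have hbracket : ⁅c + r • y, c' + s • y⁆ = ⁅c, c'⁆ + (s • ⁅c, y⁆ - r • ⁅c', y⁆) := by
    simp only [lie_add, add_lie, lie_smul, smul_lie, lie_self, ← lie_skew c' y]
    module
  exact hbracket ▸ add_mem (Submodule.mem_sup_left (C.lie_mem hc hc'))
    (sub_mem (Submodule.smul_mem _ s (hy c hc)) (Submodule.smul_mem _ r (hy c' hc')))

theorem exists_notMem_forall_lie_mem_sup_span_singleton [IsAlgClosed F] [FiniteDimensional F L]
    {K : LieIdeal F L} {C : LieSubalgebra F L} {x : L}
    (hC : C.toSubmodule = K.toSubmodule ⊔ F ∙ x) (hne : C ≠ ⊤) :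
    ∃ y ∉ C, ∀ c ∈ C, ⁅c, y⁆ ∈ C.toSubmodule ⊔ F ∙ y := by
  obtain ⟨hKC, hxC⟩ := sup_le_iff.mp hC.ge
  rw [Submodule.span_singleton_le_iff_mem] at hxC
  have : Nontrivial (L ⧸ C.toSubmodule) := Submodule.Quotient.nontrivial_iff.mpr
    fun h ↦ hne (LieSubalgebra.toSubmodule_injective h)
  obtain ⟨μ, hμ⟩ := Module.End.exists_eigenvalue (Submodule.mapQ C.toSubmodule C.toSubmodule
    (LieModule.toEnd F L L x) fun z hz ↦ C.lie_mem hxC hz)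
  obtain ⟨w, hw⟩ := hμ.exists_hasEigenvector
  obtain ⟨y, rfl⟩ := Submodule.Quotient.mk_surjective _ w
  have hxy : ⁅x, y⁆ - μ • y ∈ C := (Submodule.Quotient.eq C.toSubmodule).mp hw.apply_eq_smul
  refine ⟨y, fun hyC ↦ hw.2 ((Submodule.Quotient.mk_eq_zero _).mpr hyC), fun c hc ↦ ?_⟩
  suffices hle : C.toSubmodule ≤ (C.toSubmodule ⊔ F ∙ y).comap
      ((LieModule.toEnd F L L : L →ₗ[F] Module.End F L).flip y) from hle hc
  conv_lhs => rw [hC]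
  refine sup_le (fun k hk ↦ Submodule.mem_sup_left (hKC (lie_mem_left F L K k y hk)))
    ((Submodule.span_singleton_le_iff_mem _ _).mpr ?_)
  exact Submodule.mem_sup.mpr ⟨_, hxy, μ • y,
    Submodule.smul_mem _ μ (Submodule.mem_span_singleton_self y), sub_add_cancel _ _⟩

theorem exists_eq_sup_span_singleton_of_finrank_eq_add_one {F V : Type*} [DivisionRing F]
    [AddCommGroup V] [Module F V] [FiniteDimensional F V] {A B : Submodule F V} (hAB : A ≤ B)
    (h : Module.finrank F B = Module.finrank F A + 1) : ∃ x, B = A ⊔ F ∙ x := by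
  obtain ⟨x, hxB, hxA⟩ : ∃ x ∈ B, x ∉ A := Set.not_subset.mp fun hBA ↦ by
    have := Submodule.finrank_mono hBA
    omega
  refine ⟨x, (Submodule.eq_of_le_of_finrank_eq ?_ ?_).symm⟩
  · exact sup_le hAB ((Submodule.span_singleton_le_iff_mem _ _).mpr hxB)
  · rw [Submodule.finrank_sup_span_singleton hxA, h]

variable {M C D : LieSubalgebra F L} {N : LieIdeal F L}

theorem sup_eq_top_of_isCoatom_of_not_le (hN : IsCoatom N) (hNM : (N : LieSubalgebra F L) ≤ M)
    {I : LieIdeal F L} (hI : ¬ (I : LieSubalgebra F L) ≤ M) : N ⊔ I = ⊤ :=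
  hN.2 _ (left_lt_sup.mpr fun hIN ↦ hI (le_trans (b := (N : LieSubalgebra F L)) hIN hNM))

theorem le_of_isCoatom_of_le (hM : M ≠ ⊤) (hN : IsCoatom N) (hNM : (N : LieSubalgebra F L) ≤ M)
    {I : LieIdeal F L} (hI : (I : LieSubalgebra F L) ≤ M) : I ≤ N := by
  by_contra hIN
  have htop : N ⊔ I = ⊤ := hN.2 _ (left_lt_sup.mpr hIN)
  refine hM (LieSubalgebra.toSubmodule_injective (top_le_iff.mp ?_))
  calc (⊤ : Submodule F L) = N.toSubmodule ⊔ I.toSubmodule :=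
      congrArg LieSubmodule.toSubmodule htop.symm
    _ ≤ M.toSubmodule := sup_le hNM hI

theorem IsMaxCompletion.isSolvable_quotient [IsAlgClosed F] [FiniteDimensional F L] (hM : M ≠ ⊤)
    (hN : IsCoatom N) (hNM : (N : LieSubalgebra F L) ≤ M) (hC : IsMaxCompletion M C)
    (hrank : Module.finrank F C = Module.finrank F (strictCore C) + 1) :
    LieAlgebra.IsSolvable (L ⧸ N) := by
  obtain ⟨x, hx⟩ : ∃ x, C.toSubmodule = (strictCore C).toSubmodule ⊔ F ∙ x :=
    exists_eq_sup_span_singleton_of_finrank_eq_add_one (A := (strictCore C).toSubmodule)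
      (B := C.toSubmodule) (strictCore_le C) hrank
  have hcore : (strictCore C).toSubmodule ≤ N.toSubmodule :=
    le_of_isCoatom_of_le hM hN hNM hC.1.strictCore_le_left
  have hCN : C.toSubmodule ≤ N.toSubmodule ⊔ F ∙ x := hx.trans_le (sup_le_sup_right hcore _)
  by_cases hCtop : C = ⊤
  · refine isSolvable_quotient_of_sup_span_pair_eq_top (x := x) (y := x) (top_le_iff.mp ?_)
    simpa [hCtop] using hCN
  obtain ⟨y, hyC, hy⟩ := exists_notMem_forall_lie_mem_sup_span_singleton hx hCtop
  obtain ⟨D, hD⟩ := exists_lieSubalgebra_eq_sup_span_singleton C y hy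
  have hCD : C.toSubmodule < D.toSubmodule := by rwa [hD, Submodule.lt_sup_iff_notMem]
  obtain ⟨I, hID, hIM⟩ := hC.exists_lieIdeal_lt_not_le hCD
  have hIDle : I.toSubmodule ≤ D.toSubmodule := hID.le
  have htop : N.toSubmodule ⊔ I.toSubmodule = ⊤ :=
    congrArg LieSubmodule.toSubmodule (sup_eq_top_of_isCoatom_of_not_le hN hNM hIM)
  refine isSolvable_quotient_of_sup_span_pair_eq_top (x := x) (y := y) (top_le_iff.mp ?_)
  calc ⊤ = N.toSubmodule ⊔ I.toSubmodule := htop.symm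
    _ ≤ N.toSubmodule ⊔ D.toSubmodule := sup_le_sup_left hIDle _
    _ ≤ N.toSubmodule ⊔ (N.toSubmodule ⊔ F ∙ x ⊔ F ∙ y) :=
      sup_le_sup_left (hD.trans_le (sup_le_sup_right hCN _)) _
    _ = N.toSubmodule ⊔ Submodule.span F {x, y} := by
      rw [Submodule.span_insert, sup_assoc, ← sup_assoc, sup_idem]

theorem isSolvable_of_forall_exists_isMaxCompletion [IsAlgClosed F] [CharZero F]
    [FiniteDimensional F L]
    (h : ∀ M : LieSubalgebra F L, IsCoatom M → ∃ C : LieSubalgebra F L, IsMaxCompletion M C ∧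
      Module.finrank F C = Module.finrank F (strictCore C) + 1) : LieAlgebra.IsSolvable L := by
  refine isSolvable_of_forall_isCoatom_isSolvable_quotient (F := F) fun N hN ↦ ?_
  have hNtop : (N : LieSubalgebra F L) ≠ ⊤ := fun hNtop ↦
    hN.1 (top_le_iff.mp fun x _ ↦ hNtop.ge (LieSubalgebra.mem_top x))
  obtain ⟨M, hM, hNM⟩ := (eq_top_or_exists_le_coatom (N : LieSubalgebra F L)).resolve_left hNtop
  obtain ⟨C, hC, hrank⟩ := h M hM
  exact hC.isSolvable_quotient hM.1 hN hNM hrank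

end Extensions

/-- Let `L` be a finite-dimensional Lie algebra over an algebraically closed
field of characteristic zero. Then `L` is supersolvable if and only if every maximal
subalgebra `M` of `L` has a maximal completion `C` with `dim C - dim k(C) = 1`. -/
theorem statement15 {F L : Type*} [Field F] [IsAlgClosed F] [CharZero F] [LieRing L]
    [LieAlgebra F L] [FiniteDimensional F L] :
    IsSupersolvableLieAlgebra F L ↔
      ∀ M : LieSubalgebra F L, IsCoatom M →
        ∃ C : LieSubalgebra F L, IsMaxCompletion M C ∧
          Module.finrank F C - Module.finrank F (strictCore C) = 1 := by
  have hdim : ∀ C : LieSubalgebra F L, Module.finrank F C - Module.finrank F (strictCore C) = 1 ↔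
      Module.finrank F C = Module.finrank F (strictCore C) + 1 := fun C ↦ by omega
  simp only [hdim]
  refine ⟨fun h M hM ↦ h.exists_isMaxCompletion hM.1, fun h ↦ ?_⟩
  have := isSolvable_of_forall_exists_isMaxCompletion h
  exact isSupersolvableLieAlgebra_of_isSolvable
end
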